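/- arXiv:2409.01634 — 2 statements merged into one kernel-verified Lean document; each statement's English description precedes it below -/
import Mathlib

section
/- Let G be a finite group, N ⊴ G with G/N a p-group for a prime p, and let φ ∈ Irr(N) be G-invariant. If μ ∈ Irr(G) lies over φ and p does not divide [μ|_N, φ], then μ|_N = φ, i.e., μ is an extension of φ. -/
open scoped BigOperators Classical

noncomputable section

/-- `χ` is the character of some irreducible complex representation of `G`. -/
def IsIrrChar {G : Type} [Group G] (χ : G → ℂ) : Prop :=
  ∃ V : FDRep ℂ G, CategoryTheory.Simple V ∧ FDRep.character V = χ

/-- The degree of a character, as a natural number. -/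
def charDeg {G : Type} [Group G] (χ : G → ℂ) : ℕ := ⌊(χ 1).re⌋₊

/-- `p`-part of a natural number: the largest power of `p` dividing `n`. -/
def pPart (p n : ℕ) : ℕ := p ^ (n.factorization p)

/-- Inner product of class functions on a finite group. -/
def charInner (G : Type) [Group G] [Fintype G] (α β : G → ℂ) : ℂ :=
  (Nat.card G : ℂ)⁻¹ * ∑ g : G, α g * (starRingEnd ℂ) (β g)

/-- Restriction of a class function to a subgroup. -/
def charRes {G : Type} [Group G] (H : Subgroup G) (χ : G → ℂ) : H → ℂ := fun h => χ (h : G)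

/-- Induced class function. -/
def charInd {G : Type} [Group G] [Fintype G] (U : Subgroup G) (τ : U → ℂ) : G → ℂ :=
  fun g => (Nat.card U : ℂ)⁻¹ * ∑ x : G, if h : x * g * x⁻¹ ∈ U then τ ⟨x * g * x⁻¹, h⟩ else 0

/-!
Realise `φ` by `τ` on `U` and `μ` by `ρ` on `V`, and let `M = Hom_N(U, V)`, whose dimension is the
multiplicity `[μ|_N, φ]`. Since `φ` is invariant, each `g` in `G` has a lift `(g, X)` with `X` an
isomorphism between `τ` and its `g`-conjugate, and the lifts act on `M` by `f ↦ ρ g ∘ f ∘ X⁻¹`.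
Elements of `N` act by scalars, so `M` is a projective representation of `G ⧸ N`.

Climbing the upper central series of `G ⧸ N`, suppose the commutator of two lifts acts by a
scalar `z`. Taking determinants gives `z ^ dim M = 1`, and a power of either lift lies over `N`,
which makes the order of `z` divide the order of an element of `G ⧸ N`. By coprimality `z = 1`.
A lift commuting with all the others acts by a scalar: by Burnside's theorem `X⁻¹` lies in the
image of the group algebra of `N`, so its action on `M` comes from an endomorphism of `V`, and
Schur's lemma for `ρ` applies. Hence all lifts act by scalars, so the image of any nonzero `f` in
`M` is stable under `G`, and `f` is an isomorphism.
-/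

open scoped MonoidAlgebra
open Module (End finrank)
open Representation (IntertwiningMap IsIrreducible)

section LinearAlgebra

variable {K M : Type*} [Field K] [AddCommGroup M] [Module K M]

lemma pow_finrank_eq_one_of_mul_eq_smul_mul {A B : End K M} (hA : IsUnit A) (hB : IsUnit B)
    {z : K} (hAB : A * B = z • (B * A)) : z ^ finrank K M = 1 := by
  have hdet : LinearMap.det A * LinearMap.det B =
      z ^ finrank K M * (LinearMap.det A * LinearMap.det B) := by
    simpa only [map_mul, LinearMap.det_smul, mul_comm (LinearMap.det B)]
      using congrArg LinearMap.det hAB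
  have hne : LinearMap.det A * LinearMap.det B ≠ 0 :=
    ((hA.map LinearMap.det).mul (hB.map LinearMap.det)).ne_zero
  exact (mul_eq_right₀ hne).1 hdet.symm

lemma pow_eq_one_of_mul_eq_smul_mul [Nontrivial M] {A B : End K M} (hA : IsUnit A)
    (hB : IsUnit B) {z : K} (hAB : A * B = z • (B * A)) {n : ℕ} (hn : Commute (A ^ n) B) :
    z ^ n = 1 := by
  have hsemiconj : SemiconjBy B (z • A) A := by
    rw [SemiconjBy, hAB, mul_smul_comm]
  have hpow : z ^ n • (B * A ^ n) = B * A ^ n := by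
    rw [← mul_smul_comm, ← smul_pow, (hsemiconj.pow_right n).eq, hn.eq]
  have hne : B * A ^ n ≠ 0 := (hB.mul (hA.pow n)).ne_zero
  exact smul_left_injective K hne (hpow.trans (one_smul K _).symm)

lemma commute_of_mul_eq_smul_mul [Nontrivial M] {A B : End K M} (hA : IsUnit A) (hB : IsUnit B)
    {z : K} (hAB : A * B = z • (B * A)) {n : ℕ} (hn : Commute (A ^ n) B)
    (hcop : n.Coprime (finrank K M)) : Commute A B := by
  have hz : z ^ n.gcd (finrank K M) = 1 :=
    pow_gcd_eq_one.2 ⟨pow_eq_one_of_mul_eq_smul_mul hA hB hAB hn,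
      pow_finrank_eq_one_of_mul_eq_smul_mul hA hB hAB⟩
  rw [hcop.gcd_eq_one, pow_one] at hz
  rwa [hz, one_smul] at hAB

end LinearAlgebra

section Irreducible

variable {k G V : Type*} [Field k] [Monoid G] [AddCommGroup V] [Module k V]

lemma eq_top_of_forall_le_comap (ρ : Representation k G V) [IsIrreducible ρ]
    {W : Submodule k V} (hW : ∀ g, W ≤ W.comap (ρ g)) (hne : W ≠ ⊥) : W = ⊤ := by
  let W' : Subrepresentation ρ := ⟨W, fun g _ hv ↦ hW g hv⟩
  have hne' : W' ≠ ⊥ := fun h ↦ hne (congrArg Subrepresentation.toSubmodule h)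
  exact congrArg Subrepresentation.toSubmodule ((eq_bot_or_eq_top W').resolve_left hne')

lemma intertwiningMap_asAlgebraHom_apply {W : Type*} [AddCommGroup W] [Module k W]
    {ρ : Representation k G V} {σ : Representation k G W} (f : IntertwiningMap ρ σ) (r : k[G])
    (v : V) : f (ρ.asAlgebraHom r v) = σ.asAlgebraHom r (f v) :=
  (IntertwiningMap.equivLinearMapAsModule ρ σ f).map_smul r v

lemma range_toLinearMap_ne_bot {W : Type*} [AddCommGroup W] [Module k W]
    {ρ : Representation k G V} {σ : Representation k G W} {f : IntertwiningMap ρ σ} (hf : f ≠ 0) :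
    LinearMap.range f.toLinearMap ≠ ⊥ :=
  fun h ↦ hf (IntertwiningMap.ext (LinearMap.range_eq_bot.1 h))

lemma isIrreducible_comp_of_surjective {H : Type*} [Monoid H] (ρ : Representation k G V)
    [IsIrreducible ρ] {f : H →* G} (hf : Function.Surjective f) :
    IsIrreducible (ρ.comp f : Representation k H V) := by
  let e : Subrepresentation (ρ.comp f : Representation k H V) ≃o Subrepresentation ρ :=
    { toFun W := ⟨W.toSubmodule, hf.forall.2 W.apply_mem_toSubmodule⟩
      invFun W := ⟨W.toSubmodule, fun h ↦ W.apply_mem_toSubmodule (f h)⟩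
      left_inv _ := rfl
      right_inv _ := rfl
      map_rel_iff' := .rfl }
  exact e.isSimpleOrder

variable [IsAlgClosed k] [FiniteDimensional k V]

lemma exists_eq_smul_one_of_forall_commute (ρ : Representation k G V)
    [IsIrreducible ρ] (T : End k V) (hT : ∀ g, Commute T (ρ g)) : ∃ c : k, T = c • 1 := by
  obtain ⟨c, hc⟩ := (IsIrreducible.algebraMap_intertwiningMap_bijective_of_isAlgClosed
    (ρ := ρ)).surjective ⟨T, hT⟩
  exact ⟨c, (congrArg IntertwiningMap.toLinearMap hc).symm⟩

lemma asAlgebraHom_surjective (ρ : Representation k G V) [IsIrreducible ρ] :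
    Function.Surjective ρ.asAlgebraHom := by
  intro T
  have hT : ∀ (E : End k[G] ρ.asModule) (v : ρ.asModule), T (E v) = E (T v) := by
    intro E v
    obtain ⟨c, rfl⟩ :=
      (IsSimpleModule.algebraMap_end_bijective_of_isAlgClosed (A := k[G]) k).surjective E
    exact T.map_smul c v
  let T' : End (End k[G] ρ.asModule) ρ.asModule :=
    { toFun := T, map_add' := T.map_add, map_smul' := hT }
  have : Module.Finite (End k[G] ρ.asModule) ρ.asModule := .of_restrictScalars_finite k _ _
  obtain ⟨r, hr⟩ := Module.Finite.toModuleEnd_moduleEnd_surjective T'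
  exact ⟨r, LinearMap.ext fun v ↦ LinearMap.congr_fun hr v⟩

end Irreducible

section Multiplicity

variable {k G U V : Type*} [Field k] [Group G] {N : Subgroup G} [N.Normal]
  [AddCommGroup U] [Module k U] [AddCommGroup V] [Module k V]

/-- The extension of the inertia group of `τ` in `G` on which the obstruction to extending `τ` to
its inertia group disappears: it consists of the elements `g` of `G` together with a chosen
isomorphism `X` between `τ` and its conjugate by `g`, written `X (τ n u) = τ (g n g⁻¹) (X u)`. -/
def inertiaExtension (τ : Representation k N U) : Subgroup (G × (U ≃ₗ[k] U)) where
  carrier := {a | ∀ n u, a.2 (τ n u) = τ (MulAut.conjNormal a.1 n) (a.2 u)}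
  one_mem' n u := by simp
  mul_mem' {a b} ha hb n u := by simp [ha _ _, hb _ _]
  inv_mem' {a} ha n u := a.2.injective (by simp [ha _ _])

variable (ρ : Representation k G V) (τ : Representation k N U)

lemma inertiaExtension_symm_apply (a : inertiaExtension τ) (n : N) (u : U) :
    a.1.2.symm (τ n u) = τ (MulAut.conjNormal a.1.1⁻¹ n) (a.1.2.symm u) :=
  (a⁻¹).2 n u

/-- The space of `N`-equivariant maps from `τ` to `ρ`, whose dimension is the multiplicity of `τ`
in the restriction of `ρ` to `N` when that restriction is semisimple. -/
abbrev MultiplicitySpace := IntertwiningMap τ (ρ.comp N.subtype)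

/-- The action `f ↦ ρ g ∘ f ∘ X⁻¹` of the pairs `(g, X)` in `inertiaExtension τ` on the
multiplicity space of `τ` in `ρ`. -/
def multiplicityRep : Representation k (inertiaExtension τ) (MultiplicitySpace ρ τ) where
  toFun a :=
    { toFun f :=
        { toLinearMap := ρ a.1.1 ∘ₗ f.toLinearMap ∘ₗ a.1.2.symm.toLinearMap
          isIntertwining' n := by
            ext u
            have hf := f.isIntertwining τ (ρ.comp N.subtype) (MulAut.conjNormal a.1.1⁻¹ n)
              (a.1.2.symm u)
            have hconj : a.1.1 * (MulAut.conjNormal a.1.1⁻¹ n : N) = n * a.1.1 := by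
              rw [MulAut.conjNormal_apply]; group
            calc ρ a.1.1 (f (a.1.2.symm (τ n u)))
                = (ρ a.1.1 * ρ (MulAut.conjNormal a.1.1⁻¹ n : N)) (f (a.1.2.symm u)) := by
                  rw [inertiaExtension_symm_apply, hf]; rfl
              _ = (ρ n * ρ a.1.1) (f (a.1.2.symm u)) := by rw [← map_mul, hconj, map_mul] }
      map_add' f f' := by ext; simp
      map_smul' c f := by ext; simp }
  map_one' := by
    ext f u
    exact LinearMap.congr_fun (map_one ρ) (f u)
  map_mul' a b := by
    ext f u
    exact LinearMap.congr_fun (map_mul ρ a.1.1 b.1.1) (f (b.1.2.symm (a.1.2.symm u)))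

lemma multiplicityRep_apply_apply (a : inertiaExtension τ) (f : MultiplicitySpace ρ τ)
    (u : U) :
    multiplicityRep ρ τ a f u = ρ a.1.1 (f (a.1.2.symm u)) :=
  rfl

lemma apply_apply_eq_multiplicityRep_apply (a : inertiaExtension τ) (f : MultiplicitySpace ρ τ)
    (u : U) :
    ρ a.1.1 (f u) = multiplicityRep ρ τ a f (a.1.2 u) := by
  rw [multiplicityRep_apply_apply, LinearEquiv.symm_apply_apply]

variable {ρ τ}

lemma iSup_range_multiplicitySpace_eq_top [IsIrreducible ρ] [Nontrivial (MultiplicitySpace ρ τ)]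
    (hlift : ∀ g : G, ∃ a : inertiaExtension τ, a.1.1 = g) :
    ⨆ f : MultiplicitySpace ρ τ, LinearMap.range f.toLinearMap = ⊤ := by
  refine eq_top_of_forall_le_comap ρ (fun g ↦ iSup_le fun f ↦ ?_) ?_
  · obtain ⟨a, rfl⟩ := hlift g
    rintro _ ⟨u, rfl⟩
    exact Submodule.mem_iSup_of_mem (multiplicityRep ρ τ a f)
      ⟨a.1.2 u, (apply_apply_eq_multiplicityRep_apply ρ τ a f u).symm⟩
  · obtain ⟨f, hf⟩ := exists_ne (0 : MultiplicitySpace ρ τ)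
    exact ne_bot_of_le_ne_bot (range_toLinearMap_ne_bot hf)
      (le_iSup (fun f : MultiplicitySpace ρ τ ↦ LinearMap.range f.toLinearMap) f)

lemma end_ext_of_multiplicitySpace [IsIrreducible ρ] [Nontrivial (MultiplicitySpace ρ τ)]
    (hlift : ∀ g : G, ∃ a : inertiaExtension τ, a.1.1 = g) {S T : End k V}
    (h : ∀ (f : MultiplicitySpace ρ τ) (u : U), S (f u) = T (f u)) : S = T := by
  rw [← LinearMap.eqLocus_eq_top, eq_top_iff, ← iSup_range_multiplicitySpace_eq_top (ρ := ρ) hlift]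
  refine iSup_le fun f ↦ ?_
  rintro _ ⟨u, rfl⟩
  exact h f u

lemma bijective_of_forall_multiplicityRep_eq_smul_one [IsIrreducible τ] [IsIrreducible ρ]
    (hlift : ∀ g : G, ∃ a : inertiaExtension τ, a.1.1 = g)
    (hscalar : ∀ a, ∃ c : k, multiplicityRep ρ τ a = c • 1)
    {f : MultiplicitySpace ρ τ} (hf : f ≠ 0) : Function.Bijective f := by
  refine ⟨(IsIrreducible.injective_or_eq_zero f).resolve_right hf,
    LinearMap.range_eq_top.1
      (eq_top_of_forall_le_comap ρ (fun g ↦ ?_) (range_toLinearMap_ne_bot hf))⟩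
  obtain ⟨a, rfl⟩ := hlift g
  obtain ⟨c, hc⟩ := hscalar a
  rintro _ ⟨u, rfl⟩
  refine ⟨c • a.1.2 u, ?_⟩
  calc f (c • a.1.2 u)
      = c • f (a.1.2 u) := map_smul f c _
    _ = multiplicityRep ρ τ a f (a.1.2 u) := by rw [hc]; rfl
    _ = ρ a.1.1 (f u) := (apply_apply_eq_multiplicityRep_apply ρ τ a f u).symm

variable [IsAlgClosed k] [FiniteDimensional k U]

lemma multiplicityRep_eq_smul_one_of_mem [IsIrreducible τ] (a : inertiaExtension τ)
    (ha : a.1.1 ∈ N) : ∃ c : k, multiplicityRep ρ τ a = c • 1 := by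
  obtain ⟨c, hc⟩ := exists_eq_smul_one_of_forall_commute τ
    (τ ⟨a.1.1, ha⟩ ∘ₗ a.1.2.symm.toLinearMap) fun n ↦ by
      ext u
      have hconj : (⟨a.1.1, ha⟩ : N) * MulAut.conjNormal a.1.1⁻¹ n = n * ⟨a.1.1, ha⟩ :=
        Subtype.ext (by simp only [Subgroup.coe_mul, MulAut.conjNormal_apply]; group)
      simp only [Module.End.mul_apply, LinearMap.comp_apply, LinearEquiv.coe_coe,
        inertiaExtension_symm_apply]
      rw [← Module.End.mul_apply, ← map_mul, hconj, map_mul, Module.End.mul_apply]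
  refine ⟨c, ?_⟩
  ext f u
  calc ρ a.1.1 (f (a.1.2.symm u))
      = f (τ ⟨a.1.1, ha⟩ (a.1.2.symm u)) :=
        (f.isIntertwining τ (ρ.comp N.subtype) ⟨a.1.1, ha⟩ _).symm
    _ = f (c • u) := congrArg f (LinearMap.congr_fun hc u)
    _ = c • f u := map_smul f c u

lemma multiplicityRep_eq_smul_one_of_forall_commute [FiniteDimensional k V] [IsIrreducible τ]
    [IsIrreducible ρ] [Nontrivial (MultiplicitySpace ρ τ)]
    (hlift : ∀ g : G, ∃ a : inertiaExtension τ, a.1.1 = g) (a : inertiaExtension τ)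
    (ha : ∀ b, Commute (multiplicityRep ρ τ a) (multiplicityRep ρ τ b)) :
    ∃ c : k, multiplicityRep ρ τ a = c • 1 := by
  obtain ⟨r, hr⟩ := asAlgebraHom_surjective τ a.1.2.symm.toLinearMap
  let T : End k V := ρ a.1.1 * Representation.asAlgebraHom (ρ.comp N.subtype) r
  have hT (f : MultiplicitySpace ρ τ) (u : U) :
      T (f u) = multiplicityRep ρ τ a f u := by
    simp only [T, Module.End.mul_apply, ← intertwiningMap_asAlgebraHom_apply, hr,
      multiplicityRep_apply_apply, LinearEquiv.coe_coe]
  obtain ⟨c, hc⟩ := exists_eq_smul_one_of_forall_commute ρ T fun g ↦ by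
    obtain ⟨b, rfl⟩ := hlift g
    refine end_ext_of_multiplicitySpace (ρ := ρ) hlift fun f u ↦ ?_
    calc T (ρ b.1.1 (f u))
        = multiplicityRep ρ τ a (multiplicityRep ρ τ b f) (b.1.2 u) := by
          rw [apply_apply_eq_multiplicityRep_apply, hT]
      _ = multiplicityRep ρ τ b (multiplicityRep ρ τ a f) (b.1.2 u) :=
          congrArg (· (b.1.2 u)) (LinearMap.congr_fun (ha b).eq f)
      _ = ρ b.1.1 (T (f u)) := by rw [← apply_apply_eq_multiplicityRep_apply, hT]
  refine ⟨c, ?_⟩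
  ext f u
  exact (hT f u).symm.trans (LinearMap.congr_fun hc (f u))

lemma multiplicityRep_eq_smul_one_of_isNilpotent [FiniteDimensional k V] [IsIrreducible τ]
    [IsIrreducible ρ] [Nontrivial (MultiplicitySpace ρ τ)] [Group.IsNilpotent (G ⧸ N)]
    (hlift : ∀ g : G, ∃ a : inertiaExtension τ, a.1.1 = g)
    (hcop : ∀ g : G ⧸ N, (orderOf g).Coprime (finrank k (MultiplicitySpace ρ τ)))
    (a : inertiaExtension τ) : ∃ c : k, multiplicityRep ρ τ a = c • 1 := by
  suffices hcentral : ∀ (n : ℕ) (a : inertiaExtension τ),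
      (a.1.1 : G ⧸ N) ∈ Subgroup.upperCentralSeries (G ⧸ N) n →
        ∃ c : k, multiplicityRep ρ τ a = c • 1 by
    obtain ⟨n, hn⟩ := Group.IsNilpotent.nilpotent (G ⧸ N)
    exact hcentral n a (hn ▸ Subgroup.mem_top _)
  intro n
  induction n with
  | zero =>
    intro a ha
    rw [Subgroup.upperCentralSeries_zero, Subgroup.mem_bot, QuotientGroup.eq_one_iff] at ha
    exact multiplicityRep_eq_smul_one_of_mem a ha
  | succ n ih =>
    intro a ha
    refine multiplicityRep_eq_smul_one_of_forall_commute hlift a fun b ↦ ?_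
    obtain ⟨z, hz⟩ := ih (a * b * a⁻¹ * b⁻¹)
      (Subgroup.mem_upperCentralSeries_succ_iff.1 ha (b.1.1 : G ⧸ N))
    obtain ⟨c, hc⟩ := multiplicityRep_eq_smul_one_of_mem (ρ := ρ) (a ^ orderOf (a.1.1 : G ⧸ N)) (by
      rw [← QuotientGroup.eq_one_iff]
      exact pow_orderOf_eq_one (a.1.1 : G ⧸ N))
    have hunit (g : inertiaExtension τ) : IsUnit (multiplicityRep ρ τ g) :=
      (Group.isUnit g).map (multiplicityRep ρ τ)
    refine commute_of_mul_eq_smul_mul (z := z) (hunit a) (hunit b) ?_ ?_ (hcop a.1.1)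
    · have : a * b = a * b * a⁻¹ * b⁻¹ * (b * a) := by group
      rw [← map_mul, this, map_mul, hz, map_mul, smul_one_mul]
    · rw [← map_pow, hc]
      exact (Commute.one_left _).smul_left c

theorem nonempty_equiv_comp_subtype_of_isNilpotent [FiniteDimensional k V] [IsIrreducible τ]
    [IsIrreducible ρ] [Nontrivial (MultiplicitySpace ρ τ)] [Group.IsNilpotent (G ⧸ N)]
    (hlift : ∀ g : G, ∃ a : inertiaExtension τ, a.1.1 = g)
    (hcop : ∀ g : G ⧸ N, (orderOf g).Coprime (finrank k (MultiplicitySpace ρ τ))) :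
    Nonempty (Representation.Equiv τ (ρ.comp N.subtype)) := by
  obtain ⟨f, hf⟩ := exists_ne (0 : MultiplicitySpace ρ τ)
  exact ⟨IntertwiningMap.ofBijective f (bijective_of_forall_multiplicityRep_eq_smul_one hlift
    (multiplicityRep_eq_smul_one_of_isNilpotent hlift hcop) hf)⟩

end Multiplicity

section Characters

variable {k V : Type*} [Field k] [AddCommGroup V] [Module k V]

lemma pow_eq_one_of_hasEigenvalue {A : End k V} {n : ℕ} (hA : A ^ n = 1) {z : k}
    (hz : A.HasEigenvalue z) : z ^ n = 1 := by
  obtain ⟨v, hv⟩ := (hz.pow n).exists_hasEigenvector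
  have hv' := hv.apply_eq_smul
  rw [hA, Module.End.one_apply] at hv'
  exact smul_left_injective k hv.2 (hv'.symm.trans (one_smul k v).symm)

variable [FiniteDimensional k V]

lemma trace_eq_finsum_mul_finrank_eigenspace {A B : End k V} (hA : ⨆ z, A.eigenspace z = ⊤)
    (c : k → k) (hB : ∀ z, ∀ v ∈ A.eigenspace z, B v = c z • v) :
    LinearMap.trace k V B = ∑ᶠ z, c z * finrank k (A.eigenspace z) := by
  have hmaps (z : k) : Set.MapsTo B (A.eigenspace z) (A.eigenspace z) := fun v hv ↦
    hB z v hv ▸ Submodule.smul_mem _ _ hv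
  have htrace (z : k) : LinearMap.trace k _ (B.restrict (hmaps z)) =
      c z * finrank k (A.eigenspace z) := by
    have hrestrict : B.restrict (hmaps z) = c z • LinearMap.id :=
      LinearMap.ext fun v ↦ Subtype.ext (hB z v v.2)
    rw [hrestrict, map_smul, LinearMap.trace_id, smul_eq_mul]
  have hfin := WellFoundedGT.finite_ne_bot_of_iSupIndep A.eigenspaces_iSupIndep
  rw [LinearMap.trace_eq_sum_trace_restrict'
    (DirectSum.isInternal_submodule_of_iSupIndep_of_iSup_eq_top A.eigenspaces_iSupIndep hA)
    hfin hmaps, finsum_eq_sum_of_support_subset (s := hfin.toFinset)]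
  · exact Finset.sum_congr rfl fun z _ ↦ htrace z
  · intro z hz
    rw [Set.Finite.coe_toFinset]
    exact fun hbot ↦ hz (by simp only [Submodule.finrank_eq_zero.2 hbot, Nat.cast_zero, mul_zero])

lemma iSup_eigenspace_eq_top_of_pow_eq_one [IsAlgClosed k] {A : End k V} {n : ℕ}
    (hn : (n : k) ≠ 0) (hA : A ^ n = 1) : ⨆ z, A.eigenspace z = ⊤ := by
  refine (Module.End.isSemisimple_of_squarefree_aeval_eq_zero
    (Polynomial.separable_X_pow_sub_C (1 : k) hn one_ne_zero).squarefree ?_).iSup_eigenspace_eq_top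
  simp [hA]

lemma conj_trace_eq_trace_of_mul_eq_one {V : Type*} [AddCommGroup V] [Module ℂ V]
    [FiniteDimensional ℂ V] {A B : End ℂ V} {n : ℕ} (hn : n ≠ 0) (hA : A ^ n = 1)
    (hBA : B * A = 1) :
    starRingEnd ℂ (LinearMap.trace ℂ V A) = LinearMap.trace ℂ V B := by
  have htop := iSup_eigenspace_eq_top_of_pow_eq_one (Nat.cast_ne_zero.2 hn) hA
  have hroot (z : ℂ) (hz : A.HasEigenvalue z) : starRingEnd ℂ z = z⁻¹ :=
    (Complex.inv_eq_conj (Complex.norm_eq_one_of_pow_eq_one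
      (pow_eq_one_of_hasEigenvalue hA hz) hn)).symm
  rw [trace_eq_finsum_mul_finrank_eigenspace htop id
      fun z v hv ↦ Module.End.mem_eigenspace_iff.1 hv,
    trace_eq_finsum_mul_finrank_eigenspace htop (fun z ↦ z⁻¹) fun z v hv ↦ ?_]
  · refine ((starRingEnd ℂ).toAddMonoidHom.map_finsum_of_injective (starRingEnd ℂ).injective
      _).trans (finsum_congr fun z ↦ ?_)
    by_cases hz : A.eigenspace z = ⊥
    · simp [hz]
    · simp [hroot z hz]
  · rw [Module.End.mem_eigenspace_iff] at hv
    have hv' : v = z • B v := by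
      rw [← map_smul, ← hv, ← Module.End.mul_apply, hBA, Module.End.one_apply]
    obtain rfl | hz := eq_or_ne z 0
    · simp [show v = 0 by simpa using hv']
    · exact (inv_smul_eq_iff₀ hz).2 hv' |>.symm

lemma conj_character {G V : Type*} [Group G] [Finite G] [AddCommGroup V] [Module ℂ V]
    [FiniteDimensional ℂ V] (ρ : Representation ℂ G V) (g : G) :
    starRingEnd ℂ (ρ.character g) = ρ.character g⁻¹ := by
  refine conj_trace_eq_trace_of_mul_eq_one (orderOf_pos g).ne' ?_ ?_
  · rw [← map_pow, pow_orderOf_eq_one, map_one]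
  · rw [← map_mul, inv_mul_cancel, map_one]

lemma charInner_character_eq_finrank {H U W : Type} [Group H] [Fintype H]
    [AddCommGroup U] [Module ℂ U] [FiniteDimensional ℂ U]
    [AddCommGroup W] [Module ℂ W] [FiniteDimensional ℂ W]
    (ρ : Representation ℂ H W) (σ : Representation ℂ H U) :
    charInner H ρ.character σ.character = finrank ℂ (IntertwiningMap σ ρ) := by
  have : Invertible (Nat.card H : ℂ) := invertibleOfNonzero (Nat.cast_ne_zero.2 Nat.card_pos.ne')
  simp only [charInner, conj_character, Representation.card_inv_mul_sum_char_mul_char_eq_finrank]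

variable {G U : Type*} [Group G] [AddCommGroup U] [Module k U] [FiniteDimensional k U]

lemma nonempty_equiv_of_character_eq [Finite G] [IsAlgClosed k] [CharZero k]
    (ρ : Representation k G V) (σ : Representation k G U) [IsIrreducible ρ] [IsIrreducible σ]
    (h : ρ.character = σ.character) : Nonempty (Representation.Equiv σ ρ) := by
  have := Fintype.ofFinite G
  have : Invertible (Nat.card G : k) := invertibleOfNonzero (Nat.cast_ne_zero.2 Nat.card_pos.ne')
  have hρσ := Representation.char_orthonormal ρ σ
  rw [h, Representation.card_inv_mul_sum_char_mul_char_eq_finrank,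
    IsIrreducible.finrank_intertwiningMap_self] at hρσ
  by_contra hempty
  simp [hempty] at hρσ

lemma exists_mem_inertiaExtension [IsAlgClosed k] [CharZero k] {N : Subgroup G} [N.Normal]
    [Finite N] (τ : Representation k N U) [IsIrreducible τ] (g : G)
    (h : ∀ n, τ.character (MulAut.conjNormal g n) = τ.character n) :
    ∃ a : inertiaExtension τ, a.1.1 = g := by
  let τg : Representation k N U := τ.comp (MulAut.conjNormal g : MulAut N).toMonoidHom
  have : IsIrreducible τg := isIrreducible_comp_of_surjective τ (MulAut.conjNormal g).surjective
  obtain ⟨X⟩ := nonempty_equiv_of_character_eq τg τ (funext h)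
  exact ⟨⟨(g, X.toLinearEquiv), fun n u ↦ X.isIntertwining _ _ n u⟩, rfl⟩

end Characters

section SimpleObject

open CategoryTheory

lemma isIrreducible_of_simple {k G : Type*} [Field k] [Monoid G] (V : FDRep k G) [Simple V] :
    IsIrreducible (V.ρ : Representation k G V) := by
  have : Nontrivial (Subrepresentation (V.ρ : Representation k G V)) := by
    refine ⟨⊥, ⊤, fun h ↦ id_nonzero V ?_⟩
    ext v
    exact (h ▸ trivial : v ∈ (⊥ : Subrepresentation (V.ρ : Representation k G V)))
  refine ⟨fun W ↦ or_iff_not_imp_left.2 fun hW ↦ ?_⟩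
  let i : FDRep.of W.toRepresentation ⟶ V :=
    { hom := FGModuleCat.ofHom W.toSubmodule.subtype, comm := fun _ ↦ rfl }
  have hmono : Mono i := ConcreteCategory.mono_of_injective i Subtype.val_injective
  have hi : i ≠ 0 := by
    refine fun h ↦ hW (eq_bot_iff.2 fun v hv ↦ ?_)
    have hv0 : i (⟨v, hv⟩ : W.toSubmodule) = (0 : V) := by rw [h]; rfl
    exact hv0
  have := isIso_of_mono_of_nonzero hi
  refine eq_top_iff.2 fun v _ ↦ ?_
  obtain ⟨w, rfl⟩ := (ConcreteCategory.bijective_of_isIso i).surjective v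
  exact w.2

end SimpleObject

-- `orderOf g = 0` for `g` of infinite order, and then coprimality says `k = 1`.
theorem stmt_1_general {G : Type} [Group G] (N : Subgroup G) [N.Normal] [Fintype N]
    [Group.IsNilpotent (G ⧸ N)] (φ : N → ℂ) (hφ : IsIrrChar φ)
    (hφinv : ∀ g : G, ∀ n m : N, (m : G) = g * (n : G) * g⁻¹ → φ m = φ n)
    (μ : G → ℂ) (hμ : IsIrrChar μ) (hover : charInner N (charRes N μ) φ ≠ 0)
    (hmult : ∃ k : ℕ, charInner N (charRes N μ) φ = k ∧ ∀ g : G ⧸ N, (orderOf g).Coprime k) :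
    ∀ n : N, μ (n : G) = φ n := by
  obtain ⟨U, _, rfl⟩ := hφ
  obtain ⟨V, _, rfl⟩ := hμ
  let τ : Representation ℂ N U := U.ρ
  let ρ : Representation ℂ G V := V.ρ
  have : IsIrreducible τ := isIrreducible_of_simple U
  have : IsIrreducible ρ := isIrreducible_of_simple V
  have hinner : charInner N (charRes N V.character) U.character =
      finrank ℂ (MultiplicitySpace ρ τ) :=
    charInner_character_eq_finrank (ρ.comp N.subtype) τ
  have : Nontrivial (MultiplicitySpace ρ τ) :=
    Module.nontrivial_of_finrank_pos (R := ℂ) (Nat.pos_of_ne_zero (by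
      rwa [hinner, Nat.cast_ne_zero] at hover))
  obtain ⟨k, hk, hcop⟩ := hmult
  obtain rfl : finrank ℂ (MultiplicitySpace ρ τ) = k := Nat.cast_injective (hinner.symm.trans hk)
  have hlift (g : G) : ∃ a : inertiaExtension τ, a.1.1 = g :=
    exists_mem_inertiaExtension τ g fun n ↦ hφinv g n _ (MulAut.conjNormal_apply g n)
  obtain ⟨e⟩ := nonempty_equiv_comp_subtype_of_isNilpotent hlift hcop
  exact congrFun (Representation.char_iso e).symm

/-- Isaacs Cor. 11.29: `N ⊴ G`, `G/N` a `p`-group, `φ ∈ Irr N` `G`-invariant;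
if `μ ∈ Irr G` lies over `φ` with `p ∤ [μ|_N, φ]`, then `μ|_N = φ`. -/
theorem stmt_1 {G : Type} [Group G] [Fintype G] (p : ℕ) (hp : p.Prime)
    (N : Subgroup G) [N.Normal] (hq : IsPGroup p (G ⧸ N))
    (φ : N → ℂ) (hφ : IsIrrChar φ)
    (hφinv : ∀ g : G, ∀ n m : N, (m : G) = g * (n : G) * g⁻¹ → φ m = φ n)
    (μ : G → ℂ) (hμ : IsIrrChar μ)
    (hover : charInner N (charRes N μ) φ ≠ 0)
    (hmult : ∃ k : ℕ, charInner N (charRes N μ) φ = k ∧ ¬ p ∣ k) :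
    ∀ n : N, μ (n : G) = φ n := by
  have := Fact.mk hp
  have := hq.isNilpotent
  obtain ⟨k, hk, hpk⟩ := hmult
  refine stmt_1_general N φ hφ hφinv μ hμ hover ⟨k, hk, fun g ↦ ?_⟩
  obtain ⟨n, hn⟩ := IsPGroup.iff_orderOf.1 hq g
  exact hn ▸ ((hp.coprime_iff_not_dvd).2 hpk).pow_left n
end
end

section
/- Let P be a finite p-group acting coprimely by automorphisms on a finite group G, and let Q ≤ P. If every P-invariant irreducible character of G coincides with the set of Q-invariant irreducible characters, i.e., Irr_P(G) = Irr_Q(G), then the fixed-point subgroups coincide: C_G(P) = C_G(Q). -/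
open scoped BigOperators Classical

noncomputable section

/-!
Let a `p`-group `S` act on a group `G` of order prime to `p`, and let `x`, `y` lie in `S`-invariant
conjugacy classes. In the column orthogonality relation `∑ χ, χ x * χ x⁻¹ = |C_G(x)|` the
non-invariant characters come in `S`-orbits of length divisible by `p`, on which the summand is
constant. As `|C_G(x)|` is prime to `p`, comparison with `∑ χ, χ y * χ x⁻¹` shows that the
`S`-invariant characters separate `S`-invariant classes.

Let `K` be a `Q`-invariant class and `T ≥ Q` its stabilizer in `P`. For `a` normalizing `T`, the
classes `K` and `a • K` are both `T`-invariant, and the `T`-invariant characters, being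
`Q`-invariant and hence `P`-invariant, agree on them; so `a • K = K`. Thus `T` is self-normalizing
in the nilpotent group `P`, that is, `K` is `P`-invariant.

Counting fixed points modulo `p` puts a `P`-fixed element in every `P`-invariant class, and a
`Q`-fixed element among those conjugating one `Q`-fixed element to another. Hence every element of
`C_G(Q)` is conjugate in `C_G(Q)` to an element of `C_G(P)`, and by Jordan's theorem no proper
subgroup of a finite group meets every conjugacy class.
-/

universe u v w

section CentralElements
open Representation
open scoped MonoidAlgebra

variable {k : Type u} {G : Type v}

/-- A class function on a group: a function constant on conjugacy classes. -/
def IsClassFunction [Group G] {α : Type*} (f : G → α) : Prop :=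
  ∀ ⦃x y : G⦄, IsConj x y → f x = f y

theorem mem_center_of_isClassFunction_coeff [CommSemiring k] [Group G] {z : k[G]}
    (hz : IsClassFunction z.coeff) : z ∈ Submonoid.center k[G] := by
  rw [Submonoid.mem_center_iff]
  intro w
  induction w using MonoidAlgebra.induction_linear with
  | zero => simp
  | add w₁ w₂ h₁ h₂ => rw [add_mul, mul_add, h₁, h₂]
  | single g r =>
    ext a
    have hconj : IsConj (g⁻¹ * a) (a * g⁻¹) := isConj_iff.2 ⟨g, by group⟩
    rw [MonoidAlgebra.coeff_single_mul_apply, MonoidAlgebra.coeff_mul_single_apply, hz hconj,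
      mul_comm]

section OfModule

variable [Field k] [Monoid G] {M : Type w} [AddCommGroup M] [Module k M] [Module k[G] M]
  [IsScalarTower k k[G] M]

theorem asAlgebraHom_ofModule' :
    (ofModule' (k := k) (G := G) M).asAlgebraHom = Algebra.lsmul k k M :=
  (MonoidAlgebra.lift k (M →ₗ[k] M) G).apply_symm_apply _

theorem isIrreducible_ofModule' [IsSimpleModule k[G] M] :
    (ofModule' (k := k) (G := G) M).IsIrreducible := by
  let ρ := ofModule' (k := k) (G := G) M
  let e : ρ.asModule ≃ₗ[k[G]] M :=
    { ρ.asModuleEquiv.toAddEquiv with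
      map_smul' := fun r m => (ρ.asModuleEquiv_map_smul r m).trans
        (LinearMap.congr_fun (AlgHom.congr_fun asAlgebraHom_ofModule' r) (ρ.asModuleEquiv m)) }
  exact (irreducible_iff_isSimpleModule_asModule ρ).2 (IsSimpleModule.congr e)

end OfModule

variable [Field k] [IsAlgClosed k] [CharZero k]

theorem asAlgebraHom_eq_zero_of_trace_eq_zero [Monoid G] {V : Type*} [AddCommGroup V] [Module k V]
    [FiniteDimensional k V] (ρ : Representation k G V) [ρ.IsIrreducible] {z : k[G]}
    (hz : z ∈ Submonoid.center k[G]) (htrace : LinearMap.trace k V (ρ.asAlgebraHom z) = 0) :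
    ρ.asAlgebraHom z = 0 := by
  obtain ⟨c, hc⟩ :=
    (IsIrreducible.algebraMap_intertwiningMap_bijective_of_isAlgClosed (ρ := ρ)).2
      (IntertwiningMap.centralAlgebraMul ρ hz)
  have hscalar : ρ.asAlgebraHom z = c • LinearMap.id := by
    rw [Algebra.algebraMap_eq_smul_one] at hc
    exact congrArg IntertwiningMap.toLinearMap hc.symm
  have : Nontrivial V := IsSimpleModule.nontrivial k[G] ρ.asModule
  have hfinrank : Module.finrank k V ≠ 0 := Module.finrank_pos.ne'
  have hc0 : c = 0 := by simpa [hscalar, hfinrank] using htrace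
  rw [hscalar, hc0, zero_smul]

theorem smul_eq_zero_of_isSimpleModule [Monoid G] {M : Type w} [AddCommGroup M] [Module k M]
    [FiniteDimensional k M] [Module k[G] M] [IsScalarTower k k[G] M] [IsSimpleModule k[G] M]
    {z : k[G]} (hz : z ∈ Submonoid.center k[G])
    (htrace : ∀ (V : Type w) [AddCommGroup V] [Module k V] [FiniteDimensional k V]
      (ρ : Representation k G V) [ρ.IsIrreducible], LinearMap.trace k V (ρ.asAlgebraHom z) = 0)
    (m : M) : z • m = 0 := by
  have := isIrreducible_ofModule' (k := k) (G := G) (M := M)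
  have hzero := asAlgebraHom_eq_zero_of_trace_eq_zero (ofModule' M) hz (htrace M _)
  rw [asAlgebraHom_ofModule'] at hzero
  exact LinearMap.congr_fun hzero m

theorem eq_zero_of_forall_trace_eq_zero [Group G] [Finite G] {z : k[G]}
    (hz : z ∈ Submonoid.center k[G])
    (htrace : ∀ (V : Type (max u v)) [AddCommGroup V] [Module k V] [FiniteDimensional k V]
      (ρ : Representation k G V) [ρ.IsIrreducible], LinearMap.trace k V (ρ.asAlgebraHom z) = 0) :
    z = 0 := by
  have hker : (⊤ : Submodule k[G] k[G]) ≤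
      LinearMap.ker (LinearMap.toSpanSingleton k[G] k[G] z) := by
    rw [← IsSemisimpleModule.sSup_simples_eq_top k[G] k[G]]
    refine sSup_le fun I (_ : IsSimpleModule k[G] I) w hw => ?_
    have : FiniteDimensional k I := inferInstanceAs (FiniteDimensional k (I.restrictScalars k))
    have hzw : z * w = 0 :=
      congrArg Subtype.val (smul_eq_zero_of_isSimpleModule hz htrace (⟨w, hw⟩ : I))
    simpa [Submonoid.mem_center_iff.1 hz w] using hzw
  simpa using hker (Submodule.mem_top (x := 1))

end CentralElements

theorem eq_zero_of_forall_sum_mul_character_eq_zero {k : Type u} {G : Type v} [Field k]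
    [IsAlgClosed k] [CharZero k] [Group G] [Fintype G] {f : G → k} (hf : IsClassFunction f)
    (horth : ∀ (V : Type (max u v)) [AddCommGroup V] [Module k V] [FiniteDimensional k V]
      (ρ : Representation k G V) [ρ.IsIrreducible], ∑ g, f g * ρ.character g = 0) :
    f = 0 := by
  let z : MonoidAlgebra k G := .ofCoeff (Finsupp.equivFunOnFinite.symm f)
  have hz : z = 0 := by
    refine eq_zero_of_forall_trace_eq_zero (mem_center_of_isClassFunction_coeff hf) ?_
    intro V _ _ _ ρ _
    rw [← horth V ρ]
    simp [z, Representation.asAlgebraHom_def, MonoidAlgebra.lift_apply, Finsupp.sum_fintype,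
      Representation.character]
  funext g
  exact congrArg (fun w : MonoidAlgebra k G => w.coeff g) hz

theorem isIntegral_trace {K V : Type*} [Field K] [IsAlgClosed K] [AddCommGroup V] [Module K V]
    [FiniteDimensional K V] {f : Module.End K V} (hf : IsIntegral ℤ f) :
    IsIntegral ℤ (LinearMap.trace K V f) := by
  rw [Module.End.trace_eq_sum_roots_charpoly_of_splits (IsAlgClosed.splits _)]
  refine IsIntegral.multiset_sum fun μ hμ => ?_
  have hμ : f.HasEigenvalue μ :=
    (Module.End.hasEigenvalue_iff_isRoot_charpoly _ _).2 (Polynomial.isRoot_of_mem_roots hμ)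
  obtain ⟨v, hv⟩ := hμ.exists_hasEigenvector
  obtain ⟨q, hq, hqf⟩ := hf
  have hroot : (q.map (algebraMap ℤ K)).eval μ • v = 0 := by
    rw [← Module.End.aeval_apply_of_hasEigenvector hv, Polynomial.aeval_map_algebraMap,
      Polynomial.aeval_def, hqf, LinearMap.zero_apply]
  refine ⟨q, hq, ?_⟩
  rw [← Polynomial.eval_map]
  exact (smul_eq_zero.1 hroot).resolve_right hv.2

theorem dvd_of_natCast_dvd_integralClosure {m n : ℕ}
    (h : (m : integralClosure ℤ ℂ) ∣ n) : m ∣ n := by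
  obtain ⟨r, hr⟩ := h
  have hr : (n : ℂ) = m * r := congrArg Subtype.val hr
  rcases eq_or_ne m 0 with rfl | hm
  · simp_all
  have hquot : algebraMap ℚ ℂ (n / m) = r := by
    rw [map_div₀, map_natCast, map_natCast, div_eq_iff (Nat.cast_ne_zero.2 hm), hr, mul_comm]
  have hint : IsIntegral ℤ (n / m : ℚ) :=
    (isIntegral_algebraMap_iff (algebraMap ℚ ℂ).injective).1 (hquot ▸ r.2)
  obtain ⟨k, hk⟩ := IsIntegrallyClosed.isIntegral_iff.1 hint
  rw [eq_intCast, eq_div_iff (Nat.cast_ne_zero.2 hm)] at hk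
  exact Int.natCast_dvd_natCast.1 ⟨k, by rw [mul_comm]; exact_mod_cast hk.symm⟩

section PGroupActions

open MulAction

variable {p : ℕ} [Fact p.Prime] {S I : Type*} [Group S] [MulAction S I]

theorem card_modEq_card_inter_fixedPoints [Finite I] (hS : IsPGroup p S) (U : SubMulAction S I) :
    Nat.card U ≡ Nat.card ((U : Set I) ∩ fixedPoints S I : Set I) [MOD p] := by
  have e : fixedPoints S U ≃ ((U : Set I) ∩ fixedPoints S I : Set I) :=
    { toFun := fun u => ⟨u, u.1.2, fun s => congrArg Subtype.val (u.2 s)⟩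
      invFun := fun i => ⟨⟨i, i.2.1⟩, fun s => Subtype.ext (i.2.2 s)⟩
      left_inv := fun _ => rfl
      right_inv := fun _ => rfl }
  exact Nat.card_congr e ▸ hS.card_modEq_card_fixedPoints U

theorem exists_mem_fixedPoints_of_not_dvd_card (hS : IsPGroup p S) (U : SubMulAction S I)
    (hU : ¬ p ∣ Nat.card U) : ∃ u ∈ U, u ∈ fixedPoints S I := by
  obtain ⟨u, hu⟩ := hS.nonempty_fixed_point_of_prime_not_dvd_card U hU
  exact ⟨u, u.2, fun s => congrArg Subtype.val (hu s)⟩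

theorem natCast_dvd_sum_sub_sum_fixedPoints [Fintype I] {R : Type*} [CommRing R]
    (hS : IsPGroup p S) {F : I → R} (hF : ∀ (s : S) i, F (s • i) = F i) :
    (p : R) ∣ ∑ i, F i - ∑ i with i ∈ fixedPoints S I, F i := by
  have hfiber (c : R) : (p : R) ∣ ∑ i with F i = c, F i -
      ∑ i with i ∈ fixedPoints S I ∧ F i = c, F i := by
    let U : SubMulAction S I := ⟨{i | F i = c}, fun s _ hi => (hF s _).trans hi⟩
    have hU (i : I) : i ∈ U ↔ F i = c := Iff.rfl
    have hcard := card_modEq_card_inter_fixedPoints hS U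
    rw [Nat.subtype_card {i | F i = c} fun i => by simp [hU],
      Nat.subtype_card {i | i ∈ fixedPoints S I ∧ F i = c} fun i => by simp [hU, and_comm]] at hcard
    have hdvd := map_dvd (Int.castRingHom R) (Nat.modEq_iff_dvd.1 hcard.symm)
    rw [Finset.sum_eq_card_nsmul (b := c) (by simp), Finset.sum_eq_card_nsmul (b := c) (by simp),
      nsmul_eq_mul, nsmul_eq_mul, ← sub_mul]
    exact Dvd.dvd.mul_right (by simpa using hdvd) c
  rw [← Finset.sum_fiberwise_of_maps_to fun i _ => Finset.mem_image_of_mem F (Finset.mem_univ i),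
    ← Finset.sum_fiberwise_of_maps_to (t := Finset.univ.image F)
      fun i _ => Finset.mem_image_of_mem F (Finset.mem_univ i), ← Finset.sum_sub_distrib]
  refine Finset.dvd_sum fun c _ => ?_
  rw [Finset.filter_filter]
  exact hfiber c

end PGroupActions

section Conjugators

variable {G : Type*} [Group G] {x y z : G}

/-- The elements conjugating `x` to `y`: a left coset of the centralizer of `x`, or empty. Its
cardinality is the right-hand side of the second orthogonality relation. -/
def conjugators (x y : G) : Set G := {h | SemiconjBy h x y}

theorem card_conjugators_eq_of_isConj (x : G) (h : IsConj y z) :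
    Nat.card (conjugators x y) = Nat.card (conjugators x z) := by
  obtain ⟨c, hc⟩ := h
  refine Nat.card_congr ((Equiv.mulLeft (c : G)).subtypeEquiv fun h => ?_)
  exact ⟨hc.mul_left, fun hch => inv_mul_cancel_left (c : G) h ▸ hc.inv_symm_left.mul_left hch⟩

theorem card_conjugators_eq_zero (h : ¬ IsConj x y) : Nat.card (conjugators x y) = 0 := by
  have : IsEmpty (conjugators x y) := ⟨fun c => h ⟨toUnits c.1, c.2⟩⟩
  exact Nat.card_of_isEmpty

theorem card_conjugators_dvd_card (h : IsConj x y) : Nat.card (conjugators x y) ∣ Nat.card G := by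
  rw [← card_conjugators_eq_of_isConj x h]
  convert Subgroup.card_subgroup_dvd_card (Subgroup.centralizer {x}) using 3
  ext c
  exact Subgroup.mem_centralizer_singleton_iff.symm

theorem card_carrier_dvd_card (K : ConjClasses G) : Nat.card K.carrier ∣ Nat.card G := by
  obtain ⟨x, rfl⟩ := ConjClasses.mk_surjective K
  rw [← ConjAct.orbit_eq_carrier_conjClasses,
    Nat.card_congr (MulAction.orbitEquivQuotientStabilizer (ConjAct G) x)]
  exact Subgroup.index_dvd_card (MulAction.stabilizer (ConjAct G) x)

end Conjugators

section Characters

variable {G : Type} [Group G]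

theorem isIrrChar_character [Finite G] {V : Type} [AddCommGroup V] [Module ℂ V]
    [FiniteDimensional ℂ V] (ρ : Representation ℂ G V) [ρ.IsIrreducible] :
    IsIrrChar ρ.character := by
  have := Fintype.ofFinite G
  have := invertibleOfNonzero (NeZero.ne (Nat.card G : ℂ))
  have hnorm := Representation.char_orthonormal ρ ρ
  rw [if_pos ⟨Representation.Equiv.refl ρ⟩, inv_mul_eq_one₀ (NeZero.ne _)] at hnorm
  exact ⟨FDRep.of ρ, (FDRep.simple_iff_char_is_norm_one _).2 hnorm.symm, rfl⟩

theorem IsIrrChar.comp_mulEquiv [Finite G] {χ : G → ℂ} (hχ : IsIrrChar χ) {H : Type} [Group H]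
    (e : H ≃* G) : IsIrrChar (χ ∘ e) := by
  have := Fintype.ofFinite G
  have := Fintype.ofEquiv G e.symm.toEquiv
  obtain ⟨V, hV, rfl⟩ := hχ
  refine ⟨FDRep.of (V.ρ.comp e.toMonoidHom), ?_, rfl⟩
  rw [FDRep.simple_iff_char_is_norm_one] at hV ⊢
  rw [Nat.card_congr e.toEquiv, ← hV]
  refine Fintype.sum_equiv e.toEquiv _ _ fun h => ?_
  change V.character (e h) * V.character (e h⁻¹) = V.character (e h) * V.character (e h)⁻¹
  rw [map_inv]

/-- The irreducible complex characters of `G`. -/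
def Irr (G : Type) [Group G] : Type := {χ : G → ℂ // IsIrrChar χ}

namespace Irr

instance : FunLike (Irr G) G ℂ := ⟨Subtype.val, Subtype.val_injective⟩

theorem isClassFunction (χ : Irr G) : IsClassFunction χ := by
  obtain ⟨_, V, -, rfl⟩ := χ
  intro x y hxy
  obtain ⟨c, rfl⟩ := isConj_iff.1 hxy
  exact (FDRep.char_conj V x c).symm

theorem isIntegral [Finite G] (χ : Irr G) (g : G) : IsIntegral ℤ (χ g) := by
  obtain ⟨_, V, -, rfl⟩ := χ
  refine isIntegral_trace (IsIntegral.of_pow (orderOf_pos g) ?_)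
  rw [← map_pow, pow_orderOf_eq_one, map_one]
  exact isIntegral_one

theorem sum_mul_inv [Fintype G] (χ ψ : Irr G) :
    ∑ g, χ g * ψ g⁻¹ = if χ = ψ then (Nat.card G : ℂ) else 0 := by
  obtain ⟨_, V, hV, rfl⟩ := χ
  obtain ⟨_, W, hW, rfl⟩ := ψ
  have := invertibleOfNonzero (NeZero.ne (Nat.card G : ℂ))
  split_ifs with hVW
  · rw [← hVW]
    exact (FDRep.simple_iff_char_is_norm_one V).1 hV
  · have horth := FDRep.char_orthonormal V W
    rw [if_neg fun ⟨i⟩ => hVW (Subtype.ext (FDRep.char_iso i))] at horth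
    exact (mul_eq_zero.1 horth).resolve_left (inv_ne_zero (NeZero.ne _))

theorem linearIndependent [Finite G] : LinearIndependent ℂ fun χ : Irr G => (χ : G → ℂ) := by
  have := Fintype.ofFinite G
  let dual (ψ : Irr G) : Module.Dual ℂ (G → ℂ) :=
    Fintype.linearCombination ℂ fun g => (Nat.card G : ℂ)⁻¹ * ψ g⁻¹
  have hdual (ψ χ : Irr G) : dual ψ χ = if χ = ψ then 1 else 0 := by
    simp only [dual, Fintype.linearCombination_apply, smul_eq_mul, mul_left_comm, ← Finset.mul_sum,
      sum_mul_inv, mul_ite, mul_zero, inv_mul_cancel₀ (NeZero.ne (Nat.card G : ℂ))]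
  exact .of_pairwise_dual_eq_zero_one _ dual
    (fun ψ χ hne => (hdual ψ χ).trans (if_neg hne.symm)) fun χ => (hdual χ χ).trans (if_pos rfl)

instance [Finite G] : Finite (Irr G) := linearIndependent.finite

instance [Finite G] : Fintype (Irr G) := Fintype.ofFinite _

theorem card_mul_eq_sum [Fintype G] {f : G → ℂ} (hf : IsClassFunction f) (y : G) :
    Nat.card G * f y = ∑ χ : Irr G, (∑ g, f g * χ g) * χ y⁻¹ := by
  let c (χ : Irr G) : ℂ := ∑ g, f g * χ g
  let d (y : G) : ℂ := Nat.card G * f y - ∑ χ, c χ * χ y⁻¹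
  have hd : IsClassFunction d := fun x y hxy => by
    have hxy' : IsConj x⁻¹ y⁻¹ := hxy.imp fun _ h => h.inv_right
    simp only [d, hf hxy, fun χ : Irr G => χ.isClassFunction hxy']
  have hproj (ψ : Irr G) : ∑ y, (∑ χ, c χ * χ y⁻¹) * ψ y = Nat.card G * c ψ := calc
    _ = ∑ χ, c χ * ∑ y, ψ y * χ y⁻¹ := by
      simp only [Finset.sum_mul, Finset.mul_sum, mul_assoc, mul_comm (ψ _)]
      exact Finset.sum_comm
    _ = Nat.card G * c ψ := by
      simp [sum_mul_inv, mul_comm]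
  have horth (ψ : Irr G) : ∑ y, d y * ψ y = 0 := by
    simp only [d, sub_mul, Finset.sum_sub_distrib, hproj, mul_assoc, ← Finset.mul_sum, c, sub_self]
  have hzero := eq_zero_of_forall_sum_mul_character_eq_zero hd fun V _ _ _ ρ _ =>
    horth ⟨_, isIrrChar_character ρ⟩
  exact sub_eq_zero.1 (congrFun hzero y)

theorem sum_card_conjugators_mul [Fintype G] (χ : Irr G) (x : G) :
    ∑ g, (Nat.card (conjugators x g) : ℂ) * χ g = Nat.card G * χ x := by
  have hfiber (g : G) : (Nat.card (conjugators x g) : ℂ) * χ g =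
      ∑ h with h * x * h⁻¹ = g, χ (h * x * h⁻¹) := by
    have hcard : Nat.card (conjugators x g) = Finset.card {h | h * x * h⁻¹ = g} :=
      Nat.subtype_card _ fun h => by simp [conjugators, SemiconjBy, mul_inv_eq_iff_eq_mul]
    rw [hcard, Finset.sum_eq_card_nsmul (b := χ g) (by simp +contextual), nsmul_eq_mul]
  have hconj (h : G) : χ (h * x * h⁻¹) = χ x :=
    χ.isClassFunction (isConj_iff.2 ⟨h, rfl⟩).symm
  calc ∑ g, (Nat.card (conjugators x g) : ℂ) * χ g
      = ∑ g, ∑ h with h * x * h⁻¹ = g, χ (h * x * h⁻¹) := Finset.sum_congr rfl fun g _ => hfiber g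
    _ = ∑ h, χ (h * x * h⁻¹) := Finset.sum_fiberwise _ _ _
    _ = Nat.card G * χ x := by simp [hconj]

theorem sum_mul_inv_eq_card_conjugators [Finite G] (x y : G) :
    ∑ χ : Irr G, χ x * χ y⁻¹ = Nat.card (conjugators x y) := by
  have := Fintype.ofFinite G
  have hf : IsClassFunction fun g => (Nat.card (conjugators x g) : ℂ) := fun y z hyz =>
    congrArg _ (card_conjugators_eq_of_isConj x hyz)
  have hexp := card_mul_eq_sum hf y
  simp only [sum_card_conjugators_mul, mul_assoc, ← Finset.mul_sum] at hexp
  exact (mul_left_cancel₀ (NeZero.ne _) hexp).symm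

end Irr

end Characters

section Jordan

variable {G : Type*} [Group G] [Finite G]

theorem eq_top_of_forall_exists_isConj_mem (H : Subgroup G) (hH : ∀ x : G, ∃ y ∈ H, IsConj x y) :
    H = ⊤ := by
  have := Fintype.ofFinite G
  have hburnside : ∑ g : G, Fintype.card (MulAction.fixedBy (G ⧸ H) g) = ∑ _g : G, 1 := by
    rw [MulAction.sum_card_fixedBy_eq_card_orbits_mul_card_group,
      Fintype.card_eq_one_iff_nonempty_unique.2
        ((MulAction.pretransitive_iff_unique_quotient_of_nonempty G (G ⧸ H)).1 inferInstance)]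
    simp
  have hone_le (g : G) : 1 ≤ Fintype.card (MulAction.fixedBy (G ⧸ H) g) := by
    obtain ⟨y, hy, hgy⟩ := hH g
    obtain ⟨c, rfl⟩ := isConj_iff.1 hgy
    refine Fintype.card_pos_iff.2 ⟨(c⁻¹ : G), ?_⟩
    rw [MulAction.mem_fixedBy, MulAction.Quotient.smul_coe, eq_comm, QuotientGroup.eq]
    simpa [mul_assoc] using hy
  have hcard : 1 = Fintype.card (MulAction.fixedBy (G ⧸ H) (1 : G)) :=
    (Finset.sum_eq_sum_iff_of_le fun g _ => hone_le g).1 hburnside.symm 1 (Finset.mem_univ 1)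
  rw [← Subgroup.index_eq_one, Subgroup.index, hcard, ← Nat.card_eq_fintype_card,
    MulAction.fixedBy_one_eq_univ, Nat.card_congr (Equiv.Set.univ _)]

end Jordan

section ActionOnConjClasses

open MulAction

variable {A G : Type*} [Group A] [Group G] [MulDistribMulAction A G]

/-- The action of `A` on the conjugacy classes of a group on which `A` acts by automorphisms. -/
instance conjClassesMulAction : MulAction A (ConjClasses G) where
  smul a := ConjClasses.map (MulDistribMulAction.toMonoidHom G a)
  one_smul := by
    rintro ⟨x⟩
    exact congrArg ConjClasses.mk (one_smul A x)
  mul_smul a b := by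
    rintro ⟨x⟩
    exact congrArg ConjClasses.mk (mul_smul a b x)

theorem mk_mem_fixedPoints_iff {x : G} :
    ConjClasses.mk x ∈ fixedPoints A (ConjClasses G) ↔ ∀ a : A, IsConj (a • x) x :=
  forall_congr' fun _ => ConjClasses.mk_eq_mk_iff_isConj

theorem mk_inv_mem_fixedPoints {x : G} (hx : ConjClasses.mk x ∈ fixedPoints A (ConjClasses G)) :
    ConjClasses.mk x⁻¹ ∈ fixedPoints A (ConjClasses G) :=
  mk_mem_fixedPoints_iff.2 fun a => by
    rw [smul_inv']
    exact (mk_mem_fixedPoints_iff.1 hx a).imp fun _ h => h.inv_right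

variable {p : ℕ} [Fact p.Prime]

theorem exists_mem_carrier_mem_fixedPoints (hA : IsPGroup p A) (hG : ¬ p ∣ Nat.card G)
    {K : ConjClasses G} (hK : K ∈ fixedPoints A (ConjClasses G)) :
    ∃ y ∈ K.carrier, y ∈ fixedPoints A G := by
  let U : SubMulAction A G :=
    { carrier := K.carrier
      smul_mem' := fun a y hy => by
        rw [ConjClasses.mem_carrier_iff_mk_eq] at hy ⊢
        exact (congrArg (a • ·) hy).trans (hK a) }
  exact exists_mem_fixedPoints_of_not_dvd_card hA U fun h => hG (h.trans (card_carrier_dvd_card K))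

theorem exists_semiconjBy_mem_fixedPoints (hA : IsPGroup p A) (hG : ¬ p ∣ Nat.card G) {x y : G}
    (hx : x ∈ fixedPoints A G) (hy : y ∈ fixedPoints A G) (hxy : IsConj x y) :
    ∃ h ∈ fixedPoints A G, SemiconjBy h x y := by
  let U : SubMulAction A G :=
    { carrier := conjugators x y
      smul_mem' := fun a h (hh : SemiconjBy h x y) => show SemiconjBy (a • h) x y by
        simpa [hx a, hy a] using hh.map (MulDistribMulAction.toMonoidHom G a) }
  obtain ⟨h, hh, hfix⟩ := exists_mem_fixedPoints_of_not_dvd_card hA U fun h =>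
    hG (h.trans (card_conjugators_dvd_card hxy))
  exact ⟨h, hfix, hh⟩

end ActionOnConjClasses

section ActionOnIrr

open MulAction

variable {A : Type*} {G : Type} [Group A] [Group G] [Finite G] [MulDistribMulAction A G]

/-- The action of `A` on the irreducible characters of a group on which `A` acts by
automorphisms; the inverse in `(a • χ) g = χ (a⁻¹ • g)` makes it a left action. -/
instance irrMulAction : MulAction A (Irr G) where
  smul a χ := ⟨_, χ.2.comp_mulEquiv (MulDistribMulAction.toMulEquiv G a⁻¹)⟩
  one_smul χ := Subtype.ext <| funext fun g => congrArg χ (by simp)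
  mul_smul a b χ := Subtype.ext <| funext fun g => congrArg χ (by simp [mul_smul])

theorem Irr.smul_apply (a : A) (χ : Irr G) (g : G) : (a • χ) g = χ (a⁻¹ • g) := rfl

theorem Irr.mem_fixedPoints_iff {χ : Irr G} :
    χ ∈ fixedPoints A (Irr G) ↔ ∀ (a : A) (g : G), χ (a • g) = χ g := by
  refine ⟨fun h a g => ?_, fun h a => DFunLike.ext _ _ fun g => h a⁻¹ g⟩
  rw [← DFunLike.congr_fun (h a) (a • g), Irr.smul_apply, inv_smul_smul]

theorem Irr.smul_apply_of_mk_mem_fixedPoints (a : A) (χ : Irr G) {x : G}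
    (hx : ConjClasses.mk x ∈ fixedPoints A (ConjClasses G)) : (a • χ) x = χ x :=
  χ.isClassFunction (mk_mem_fixedPoints_iff.1 hx a⁻¹)

variable {p : ℕ} [Fact p.Prime]

theorem isConj_of_forall_mem_fixedPoints_eq (hA : IsPGroup p A) (hG : ¬ p ∣ Nat.card G) {x y : G}
    (hx : ConjClasses.mk x ∈ fixedPoints A (ConjClasses G))
    (hy : ConjClasses.mk y ∈ fixedPoints A (ConjClasses G))
    (hxy : ∀ χ ∈ fixedPoints A (Irr G), χ x = χ y) : IsConj x y := by
  by_contra hconj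
  let F (χ : Irr G) : integralClosure ℤ ℂ :=
    ⟨(χ x - χ y) * χ x⁻¹, ((χ.isIntegral x).sub (χ.isIntegral y)).mul (χ.isIntegral x⁻¹)⟩
  have hF (a : A) (χ : Irr G) : F (a • χ) = F χ := by
    simp only [F, Irr.smul_apply_of_mk_mem_fixedPoints a χ hx,
      Irr.smul_apply_of_mk_mem_fixedPoints a χ hy,
      Irr.smul_apply_of_mk_mem_fixedPoints a χ (mk_inv_mem_fixedPoints hx)]
  have hfixed : ∑ χ with χ ∈ fixedPoints A (Irr G), F χ = 0 :=
    Finset.sum_eq_zero fun χ hχ => Subtype.ext <| by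
      simp [F, hxy χ (Finset.mem_filter.1 hχ).2]
  have hsum : ∑ χ, F χ = (Nat.card (conjugators x x) : integralClosure ℤ ℂ) := by
    apply Subtype.ext
    simp [F, sub_mul, Irr.sum_mul_inv_eq_card_conjugators,
      card_conjugators_eq_zero fun h => hconj h.symm]
  have hdvd := natCast_dvd_sum_sub_sum_fixedPoints hA hF
  rw [hfixed, hsum, sub_zero] at hdvd
  exact hG <| (dvd_of_natCast_dvd_integralClosure hdvd).trans
    (card_conjugators_dvd_card (IsConj.refl x))

variable [Finite A] {Q : Subgroup A}

theorem mem_fixedPoints_conjClasses_of_irr (hA : IsPGroup p A) (hG : ¬ p ∣ Nat.card G)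
    (hIrr : fixedPoints Q (Irr G) ⊆ fixedPoints A (Irr G)) {K : ConjClasses G}
    (hK : K ∈ fixedPoints Q (ConjClasses G)) : K ∈ fixedPoints A (ConjClasses G) := by
  have := hA.isNilpotent
  let T := stabilizer A K
  have hT : T = ⊤ := by
    refine normalizerCondition_iff_only_full_group_self_normalizing.1
      Group.normalizerCondition_of_isNilpotent T (le_antisymm (fun a ha => ?_) T.le_normalizer)
    obtain ⟨x, rfl⟩ := ConjClasses.mk_surjective K
    have hx : ConjClasses.mk x ∈ fixedPoints T (ConjClasses G) := fun t => t.2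
    have hax : ConjClasses.mk (a • x) ∈ fixedPoints T (ConjClasses G) := fun t => by
      have hconj : (a⁻¹ * t * a) • ConjClasses.mk x = ConjClasses.mk x :=
        (Subgroup.mem_normalizer_iff''.1 ha t).1 t.2
      have hsmul : (t : A) • a • ConjClasses.mk x = a • (a⁻¹ * t * a) • ConjClasses.mk x := by
        simp only [smul_smul, mul_assoc, mul_inv_cancel_left]
      exact hsmul.trans (congrArg (a • ·) hconj)
    refine ConjClasses.mk_eq_mk_iff_isConj.2 <|
      isConj_of_forall_mem_fixedPoints_eq (hA.to_subgroup T) hG hax hx fun χ hχ => ?_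
    have hχQ : χ ∈ fixedPoints Q (Irr G) := fun q => hχ ⟨q, hK q⟩
    exact Irr.mem_fixedPoints_iff.1 (hIrr hχQ) a x
  exact fun a => (hT ▸ Subgroup.mem_top a : a ∈ T)

theorem fixedPoints_subgroup_le_of_irr (hA : IsPGroup p A) (hG : ¬ p ∣ Nat.card G)
    (hIrr : fixedPoints Q (Irr G) ⊆ fixedPoints A (Irr G)) :
    FixedPoints.subgroup Q G ≤ FixedPoints.subgroup A G := by
  rw [← Subgroup.subgroupOf_eq_top]
  refine eq_top_of_forall_exists_isConj_mem _ fun ⟨x, hx⟩ => ?_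
  have hxQ : ConjClasses.mk x ∈ fixedPoints Q (ConjClasses G) := fun q =>
    congrArg ConjClasses.mk (hx q)
  obtain ⟨y, hyK, hy⟩ :=
    exists_mem_carrier_mem_fixedPoints hA hG (mem_fixedPoints_conjClasses_of_irr hA hG hIrr hxQ)
  have hxy : IsConj x y :=
    (ConjClasses.mk_eq_mk_iff_isConj.1 (ConjClasses.mem_carrier_iff_mk_eq.1 hyK)).symm
  have hyQ : y ∈ fixedPoints Q G := fun q => hy q
  obtain ⟨h, hh, hsemi⟩ := exists_semiconjBy_mem_fixedPoints (hA.to_subgroup Q) hG hx hyQ hxy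
  exact ⟨⟨y, hyQ⟩, hy, toUnits ⟨h, hh⟩, Subtype.ext hsemi⟩

end ActionOnIrr

/-- If a `p`-group `P` acts coprimely on `G` via `φ`, `Q ≤ P`, and the `P`-invariant
irreducible characters of `G` coincide with the `Q`-invariant ones, then `C_G(P) = C_G(Q)`. -/
theorem stmt_4 {G P : Type} [Group G] [Fintype G] [Group P] [Fintype P] (p : ℕ)
    (hp : p.Prime) (hPp : IsPGroup p P) (φ : P →* MulAut G)
    (hcop : ¬ p ∣ Nat.card G) (Q : Subgroup P)
    (hIrr : {χ : G → ℂ | IsIrrChar χ ∧ ∀ a : P, ∀ g : G, χ (φ a g) = χ g} =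
            {χ : G → ℂ | IsIrrChar χ ∧ ∀ a ∈ Q, ∀ g : G, χ (φ a g) = χ g}) :
    {g : G | ∀ a : P, φ a g = g} = {g : G | ∀ a ∈ Q, φ a g = g} := by
  have := Fact.mk hp
  let _ := MulDistribMulAction.compHom G φ
  have hIrr' : MulAction.fixedPoints Q (Irr G) ⊆ MulAction.fixedPoints P (Irr G) := fun χ hχ => by
    have hχQ := Irr.mem_fixedPoints_iff.1 hχ
    have hχP := hIrr.superset ⟨χ.2, fun a ha => hχQ ⟨a, ha⟩⟩
    exact Irr.mem_fixedPoints_iff.2 hχP.2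
  have hle := fixedPoints_subgroup_le_of_irr hPp hcop hIrr'
  exact Set.Subset.antisymm (fun g hg a _ => hg a) fun g hg => hle fun q : Q => hg q q.2
end
end
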